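/- Let K be a field, S = K[x_1,…,x_n], 𝔪 = (x_1,…,x_n), let A ⊆ ℕⁿ be a finite nonempty antichain under componentwise order such that for every i ∈ {1,…,n} there exists a ∈ A with a_i > 0, and let I = (x^a : a ∈ A). Let k ≥ 0 and let v be a monomial with v ∈ (I𝔪^{k+1} : 𝔪) but v ∉ I𝔪^{k}. Then for every p ∈ {1,…,n} the exponent of x_p in v is at most (max_{a ∈ A} a_p) − 1; in particular deg(v) ≤ Σ_{i=1}^{n} max_{a ∈ A} a_i − n. -/

import Mathlib

/-- `𝔪 ^ k` is spanned by the monomials of degree `k`. -/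
theorem aux_pow_eq (K : Type*) [Field K] (n k : ℕ) :
    (Ideal.span (Set.range (MvPolynomial.X : Fin n → MvPolynomial (Fin n) K))) ^ k =
    Ideal.span ((fun a : Fin n →₀ ℕ => MvPolynomial.monomial a (1 : K)) '' {d | d.degree = k}) :=
  MvPolynomial.pow_idealOfVars_eq_span (σ := Fin n) (R := K) k

theorem aux_mul_eq (K : Type*) [Field K] (n k : ℕ) (A : Set (Fin n →₀ ℕ)) :
    Ideal.span ((fun a : Fin n →₀ ℕ => MvPolynomial.monomial a (1 : K)) '' A) *
    (Ideal.span (Set.range (MvPolynomial.X : Fin n → MvPolynomial (Fin n) K))) ^ k =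
    Ideal.span ((fun a : Fin n →₀ ℕ => MvPolynomial.monomial a (1 : K)) ''
      {c | ∃ a ∈ A, ∃ d : Fin n →₀ ℕ, d.degree = k ∧ c = a + d}) := by
  rw [aux_pow_eq, Ideal.span_mul_span']
  congr 1
  ext f
  constructor
  · rintro ⟨_, ⟨a, ha, rfl⟩, _, ⟨d, hd, rfl⟩, rfl⟩
    exact ⟨a + d, ⟨a, ha, d, hd, rfl⟩, by simp [MvPolynomial.monomial_mul]⟩
  · rintro ⟨_, ⟨a, ha, d, hd, rfl⟩, rfl⟩
    exact ⟨_, ⟨a, ha, rfl⟩, _, ⟨d, hd, rfl⟩, by simp [MvPolynomial.monomial_mul]⟩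

theorem aux_exists_le (n k : ℕ) (e : Fin n →₀ ℕ) (h : k ≤ e.degree) :
    ∃ d : Fin n →₀ ℕ, d ≤ e ∧ d.degree = k := by
  induction e using Finsupp.induction_linear generalizing k with
  | zero => exact ⟨0, le_refl _, by rw [map_zero] at h ⊢; omega⟩
  | add f g hf hg =>
    rw [map_add] at h
    obtain ⟨d, hd, hd'⟩ := hf (min k f.degree) (min_le_right _ _)
    obtain ⟨d2, hd2, hd2'⟩ := hg (k - min k f.degree) (by omega)
    exact ⟨d + d2, add_le_add hd hd2, by rw [map_add]; omega⟩
  | single i x =>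
    rw [Finsupp.degree_single] at h
    exact ⟨Finsupp.single i k, Finsupp.single_le_single.2 h, Finsupp.degree_single _ _⟩

theorem aux_mem (K : Type*) [Field K] (n k : ℕ) (A : Set (Fin n →₀ ℕ)) (c : Fin n →₀ ℕ) :
    MvPolynomial.monomial c (1 : K) ∈
      Ideal.span ((fun a : Fin n →₀ ℕ => MvPolynomial.monomial a (1 : K)) '' A) *
      (Ideal.span (Set.range (MvPolynomial.X : Fin n → MvPolynomial (Fin n) K))) ^ k ↔
    ∃ a ∈ A, a ≤ c ∧ a.degree + k ≤ c.degree := by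
  classical
  rw [aux_mul_eq, MvPolynomial.mem_ideal_span_monomial_image,
    MvPolynomial.support_monomial, if_neg one_ne_zero]
  simp only [Finset.mem_singleton, forall_eq]
  constructor
  · rintro ⟨_, ⟨a, ha, d, hd, rfl⟩, hle⟩
    refine ⟨a, ha, le_trans le_self_add hle, ?_⟩
    have := Finsupp.degree_mono hle
    rw [map_add] at this
    omega
  · rintro ⟨a, ha, hle, hdeg⟩
    obtain ⟨e, rfl⟩ := exists_add_of_le hle
    rw [map_add] at hdeg
    obtain ⟨d, hd, hd'⟩ := aux_exists_le n k e (by omega)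
    exact ⟨a + d, ⟨a, ha, d, hd', rfl⟩, add_le_add le_rfl hd⟩

/-- Let `I = (x^a : a ∈ A)` with `A` a nonempty antichain such that every variable
divides some generator. If a monomial `v = x^b` lies in `(I𝔪^{k+1} : 𝔪)` but not in
`I𝔪^k`, then `b_p ≤ (max_{a ∈ A} a_p) − 1` for every `p`, and in particular
`deg v ≤ Σ_i max_{a ∈ A} a_i − n`. -/
theorem stmt_8 (K : Type*) [Field K] (n : ℕ) (A : Finset (Fin n →₀ ℕ))
    (hAne : A.Nonempty)
    (hA : ∀ a ∈ A, ∀ b ∈ A, a ≤ b → a = b)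
    (hcover : ∀ i : Fin n, ∃ a ∈ A, 0 < a i)
    (m I : Ideal (MvPolynomial (Fin n) K))
    (hm : m = Ideal.span (Set.range (MvPolynomial.X : Fin n → MvPolynomial (Fin n) K)))
    (hI : I = Ideal.span ((fun a : Fin n →₀ ℕ => MvPolynomial.monomial a (1 : K)) '' A))
    (k : ℕ) (b : Fin n →₀ ℕ)
    (hvin : MvPolynomial.monomial b (1 : K) ∈ (I * m ^ (k + 1)).colon m)
    (hvnot : MvPolynomial.monomial b (1 : K) ∉ I * m ^ k) :
    (∀ p : Fin n, b p ≤ A.sup (fun a => a p) - 1) ∧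
      (∑ i : Fin n, b i) ≤ (∑ i : Fin n, A.sup (fun a => a i)) - n := by
  subst hm hI
  have key : ∀ p : Fin n, b p + 1 ≤ A.sup (fun a => a p) := by
    intro p
    have h1 := Submodule.mem_colon.1 hvin (MvPolynomial.X p) (Ideal.subset_span ⟨p, rfl⟩)
    rw [smul_eq_mul, MvPolynomial.X, MvPolynomial.monomial_mul, one_mul, aux_mem] at h1
    rw [aux_mem] at hvnot
    obtain ⟨a, ha, hle, hdeg⟩ := h1
    rw [map_add, Finsupp.degree_single] at hdeg
    have h2 : ¬ a ≤ b := fun h => hvnot ⟨a, ha, h, by omega⟩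
    have h3 : b p + 1 ≤ a p := by
      by_contra hlt
      apply h2
      intro i
      have := hle i
      by_cases hi : i = p
      · subst hi; omega
      · simpa [Finsupp.single_apply, Ne.symm hi] using this
    exact h3.trans (Finset.le_sup (f := fun a : Fin n →₀ ℕ => a p) ha)
  refine ⟨fun p => by have := key p; omega, ?_⟩
  have := Finset.sum_le_sum (fun i (_ : i ∈ Finset.univ) => key i)
  rw [Finset.sum_add_distrib] at this
  simp at this
  omega
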